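/- arXiv:1411.4732 — 2 statements merged into one kernel-verified Lean document; each statement's English description precedes it below -/
import Mathlib

section
/- Consider the ImperfectRdn example: the joint distribution of (X₁, X₂, Y) on Fin 2 × Fin 2 × Fin 2 assigns probability 0.499 to (0,0,0), 0.001 to (0,1,0), 0.5 to (1,1,1), and 0 elsewhere. For any random variable Q on a finite type jointly distributed with (X₁, X₂, Y) consistently with this distribution, if H(Q|X₁) = 0 and H(Q|X₂) = 0, then I(Q:Y) = 0. (Hence I_∧(X₁, X₂ : Y) = 0 for ImperfectRdn: I_∧ is blind to the noisy correlation between X₁ and X₂.) -/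
open Real Finset

/- STATEMENT 12: The ImperfectRdn example.  The joint distribution of `(X₁, X₂, Y)` on
`Fin 2 × Fin 2 × Fin 2` assigns probability `0.499` to `(0,0,0)`, `0.001` to `(0,1,0)`,
`0.5` to `(1,1,1)` and `0` elsewhere.  For any `Q` jointly distributed with
`(X₁, X₂, Y)` consistently with this distribution, if `H(Q|X₁) = 0` and `H(Q|X₂) = 0`
then `I(Q:Y) = 0`.  Hence `I_∧(X₁, X₂ : Y) = 0` for ImperfectRdn. -/

section Defs

variable {Q A B C : Type*} [Fintype Q] [Fintype A] [Fintype B] [Fintype C]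

/-- Marginal of `Q`. -/
noncomputable def margQ (p : Q × A × B × C → ℝ) (q : Q) : ℝ :=
  ∑ a, ∑ b, ∑ c, p (q, a, b, c)

/-- Marginal of `X₁`. -/
noncomputable def margX1 (p : Q × A × B × C → ℝ) (a : A) : ℝ :=
  ∑ q, ∑ b, ∑ c, p (q, a, b, c)

/-- Marginal of `X₂`. -/
noncomputable def margX2 (p : Q × A × B × C → ℝ) (b : B) : ℝ :=
  ∑ q, ∑ a, ∑ c, p (q, a, b, c)

/-- Marginal of `Y`. -/
noncomputable def margY (p : Q × A × B × C → ℝ) (c : C) : ℝ :=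
  ∑ q, ∑ a, ∑ b, p (q, a, b, c)

/-- Marginal of `(Q, X₁)`. -/
noncomputable def margQX1 (p : Q × A × B × C → ℝ) (q : Q) (a : A) : ℝ :=
  ∑ b, ∑ c, p (q, a, b, c)

/-- Marginal of `(Q, X₂)`. -/
noncomputable def margQX2 (p : Q × A × B × C → ℝ) (q : Q) (b : B) : ℝ :=
  ∑ a, ∑ c, p (q, a, b, c)

/-- Marginal of `(Q, Y)`. -/
noncomputable def margQY (p : Q × A × B × C → ℝ) (q : Q) (c : C) : ℝ :=
  ∑ a, ∑ b, p (q, a, b, c)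

/-- Conditional entropy `H(Q|X₁)`. -/
noncomputable def condEntQX1 (p : Q × A × B × C → ℝ) : ℝ :=
  -∑ q, ∑ a, margQX1 p q a * logb 2 (margQX1 p q a / margX1 p a)

/-- Conditional entropy `H(Q|X₂)`. -/
noncomputable def condEntQX2 (p : Q × A × B × C → ℝ) : ℝ :=
  -∑ q, ∑ b, margQX2 p q b * logb 2 (margQX2 p q b / margX2 p b)

/-- Mutual information `I(Q:Y)`. -/
noncomputable def miQY (p : Q × A × B × C → ℝ) : ℝ :=
  ∑ q, ∑ c, margQY p q c * logb 2 (margQY p q c / (margQ p q * margY p c))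

end Defs

/-!
If `H(Q|X₁) = H(Q|X₂) = 0`, then almost surely `Q` is a function of `X₁` and also a function of
`X₂`. Those two functions agree on every outcome `(x₁, x₂)` of positive probability, so `Q` is
constant along the edges of the bipartite graph of such outcomes (Gács and Körner, Witsenhausen).
When that graph is connected, `Q` is almost surely constant and carries no information on `Y`.
For ImperfectRdn the outcome `(0, 1)`, although it has probability only `0.001`, connects the graph.
-/

section Entropy

variable {Q A : Type*} [Fintype Q] [Fintype A] {b x m : ℝ} {f : Q → A → ℝ}

theorem mul_logb_div_nonpos (hb : 1 < b) (hx : 0 ≤ x) (hxm : x ≤ m) :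
    x * logb b (x / m) ≤ 0 :=
  mul_nonpos_of_nonneg_of_nonpos hx <|
    logb_nonpos hb (div_nonneg hx (hx.trans hxm)) (div_le_one_of_le₀ hxm (hx.trans hxm))

theorem eq_of_mul_logb_div_eq_zero (hb : 1 < b) (hx : 0 < x) (hm : 0 < m)
    (h : x * logb b (x / m) = 0) : x = m :=
  have hlog : logb b (x / m) = 0 := (mul_eq_zero.1 h).resolve_left hx.ne'
  (div_eq_one_iff_eq hm.ne').1 (eq_one_of_pos_of_logb_eq_zero hb (div_pos hx hm) hlog)

theorem mul_logb_div_sum_eq_zero (hb : 1 < b) (hf : ∀ q a, 0 ≤ f q a)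
    (h : ∑ q, ∑ a, f q a * logb b (f q a / ∑ q', f q' a) = 0) (q : Q) (a : A) :
    f q a * logb b (f q a / ∑ q', f q' a) = 0 := by
  have hterm (q a) : f q a * logb b (f q a / ∑ q', f q' a) ≤ 0 :=
    mul_logb_div_nonpos hb (hf q a) (single_le_sum (fun i _ ↦ hf i a) (mem_univ q))
  have hrow : ∑ a, f q a * logb b (f q a / ∑ q', f q' a) = 0 :=
    (sum_eq_zero_iff_of_nonpos fun q _ ↦ sum_nonpos fun a _ ↦ hterm q a).1 h q (mem_univ q)
  exact (sum_eq_zero_iff_of_nonpos fun a _ ↦ hterm q a).1 hrow a (mem_univ a)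

-- Left uniqueness of the support of the law `f` of `(Q, X)`: `Q` is a.s. a function of `X`.
theorem leftUnique_of_condEntropy_eq_zero (hb : 1 < b) (hf : ∀ q a, 0 ≤ f q a)
    (h : -∑ q, ∑ a, f q a * logb b (f q a / ∑ q', f q' a) = 0) :
    Relator.LeftUnique fun q a ↦ f q a ≠ 0 := by
  intro q q' a hq hq'
  by_contra hne
  have hpos : 0 < f q a := (hf q a).lt_of_ne' hq
  have hpos' : 0 < f q' a := (hf q' a).lt_of_ne' hq'
  have hadd : f q a + f q' a ≤ ∑ i, f i a :=
    add_le_sum (fun i _ ↦ hf i a) (mem_univ q) (mem_univ q') hne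
  have hall : f q a = ∑ i, f i a :=
    eq_of_mul_logb_div_eq_zero hb hpos (by linarith)
      (mul_logb_div_sum_eq_zero hb hf (neg_eq_zero.1 h) q a)
  linarith

end Entropy

section CommonInformation

theorem sum_sum_ne_zero {ι κ : Type*} [Fintype ι] [Fintype κ] {g : ι → κ → ℝ}
    (hg : ∀ i j, 0 ≤ g i j) {i : ι} {j : κ} (h : g i j ≠ 0) : ∑ i, ∑ j, g i j ≠ 0 := fun h0 ↦
  have hi : ∑ j, g i j = 0 :=
    (sum_eq_zero_iff_of_nonneg fun i _ ↦ sum_nonneg fun j _ ↦ hg i j).1 h0 i (mem_univ i)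
  h ((sum_eq_zero_iff_of_nonneg fun j _ ↦ hg i j).1 hi j (mem_univ j))

variable {Q A B C : Type*} {p : Q × A × B × C → ℝ}

/-- The bipartite graph on the values of `X₁` and `X₂` in which `x₁` and `x₂` are adjacent when
`(X₁, X₂) = (x₁, x₂)` has positive probability. The components that contain an edge are the
values of the Gács–Körner common part of `X₁` and `X₂`. -/
def supportGraph (p : Q × A × B × C → ℝ) : SimpleGraph (A ⊕ B) :=
  .fromRel fun u v ↦ ∃ q a b c, u = .inl a ∧ v = .inr b ∧ p (q, a, b, c) ≠ 0

theorem supportGraph_adj_inl_inr {q : Q} {a : A} {b : B} {c : C} (h : p (q, a, b, c) ≠ 0) :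
    (supportGraph p).Adj (.inl a) (.inr b) :=
  ⟨Sum.inl_ne_inr, .inl ⟨q, a, b, c, rfl, rfl, h⟩⟩

variable [Fintype C]

section

variable [Fintype B]

theorem margQX1_nonneg (hnn : ∀ s, 0 ≤ p s) (q : Q) (a : A) : 0 ≤ margQX1 p q a :=
  sum_nonneg fun _ _ ↦ sum_nonneg fun _ _ ↦ hnn _

theorem margQX1_ne_zero (hnn : ∀ s, 0 ≤ p s) {q : Q} {a : A} {b : B} {c : C}
    (h : p (q, a, b, c) ≠ 0) : margQX1 p q a ≠ 0 :=
  sum_sum_ne_zero (fun _ _ ↦ hnn _) h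

theorem margX1_ne_zero [Fintype Q] (hnn : ∀ s, 0 ≤ p s) {q : Q} {a : A} {b : B} {c : C}
    (h : p (q, a, b, c) ≠ 0) : margX1 p a ≠ 0 := fun h0 ↦
  margQX1_ne_zero hnn h <|
    (sum_eq_zero_iff_of_nonneg fun q _ ↦ margQX1_nonneg hnn q a).1 h0 q (mem_univ q)

theorem leftUnique_margQX1 [Fintype Q] [Fintype A] (hnn : ∀ s, 0 ≤ p s) (h : condEntQX1 p = 0) :
    Relator.LeftUnique fun q a ↦ margQX1 p q a ≠ 0 :=
  leftUnique_of_condEntropy_eq_zero one_lt_two (margQX1_nonneg hnn) h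

end

variable [Fintype A]

theorem margQX2_nonneg (hnn : ∀ s, 0 ≤ p s) (q : Q) (b : B) : 0 ≤ margQX2 p q b :=
  sum_nonneg fun _ _ ↦ sum_nonneg fun _ _ ↦ hnn _

theorem margQX2_ne_zero (hnn : ∀ s, 0 ≤ p s) {q : Q} {a : A} {b : B} {c : C}
    (h : p (q, a, b, c) ≠ 0) : margQX2 p q b ≠ 0 :=
  sum_sum_ne_zero (fun _ _ ↦ hnn _) h

variable [Fintype B]

theorem leftUnique_margQX2 [Fintype Q] (hnn : ∀ s, 0 ≤ p s) (h : condEntQX2 p = 0) :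
    Relator.LeftUnique fun q b ↦ margQX2 p q b ≠ 0 :=
  leftUnique_of_condEntropy_eq_zero one_lt_two (margQX2_nonneg hnn) h

theorem margQX1_ne_zero_iff_margQX2_ne_zero (hnn : ∀ s, 0 ≤ p s)
    (h1 : Relator.LeftUnique fun q a ↦ margQX1 p q a ≠ 0)
    (h2 : Relator.LeftUnique fun q b ↦ margQX2 p q b ≠ 0)
    {q₀ : Q} {a : A} {b : B} {c : C} (h : p (q₀, a, b, c) ≠ 0) (q : Q) :
    margQX1 p q a ≠ 0 ↔ margQX2 p q b ≠ 0 where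
  mp hq := h1 hq (margQX1_ne_zero hnn h) ▸ margQX2_ne_zero hnn h
  mpr hq := h2 hq (margQX2_ne_zero hnn h) ▸ margQX1_ne_zero hnn h

/-- The event that `Q = q` is compatible with the given value of `X₁` or of `X₂`, a vertex of
`supportGraph p`. This is the property carried along the edges of the graph. -/
def IsCompatible (p : Q × A × B × C → ℝ) (q : Q) : A ⊕ B → Prop :=
  Sum.elim (fun a ↦ margQX1 p q a ≠ 0) (fun b ↦ margQX2 p q b ≠ 0)

theorem IsCompatible.of_reachable (hnn : ∀ s, 0 ≤ p s)
    (h1 : Relator.LeftUnique fun q a ↦ margQX1 p q a ≠ 0)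
    (h2 : Relator.LeftUnique fun q b ↦ margQX2 p q b ≠ 0)
    {q : Q} {u v : A ⊕ B} (huv : (supportGraph p).Reachable u v) (hu : IsCompatible p q u) :
    IsCompatible p q v := by
  rw [SimpleGraph.reachable_iff_reflTransGen] at huv
  induction huv with
  | refl => exact hu
  | tail _ hadj ih =>
    obtain ⟨-, ⟨q₀, a, b, c, rfl, rfl, h⟩ | ⟨q₀, a, b, c, rfl, rfl, h⟩⟩ := hadj
    · exact (margQX1_ne_zero_iff_margQX2_ne_zero hnn h1 h2 h q).1 ih
    · exact (margQX1_ne_zero_iff_margQX2_ne_zero hnn h1 h2 h q).2 ih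

variable [Fintype Q]

/-- `Q` takes at most one value with positive probability. -/
def IsAlmostConst (p : Q × A × B × C → ℝ) : Prop :=
  ∀ ⦃q q' s s'⦄, p (q, s) ≠ 0 → p (q', s') ≠ 0 → q = q'

theorem isAlmostConst_of_condEnt_eq_zero (hnn : ∀ s, 0 ≤ p s)
    (hconn : ∀ a a', margX1 p a ≠ 0 → margX1 p a' ≠ 0 →
      (supportGraph p).Reachable (.inl a) (.inl a'))
    (h1 : condEntQX1 p = 0) (h2 : condEntQX2 p = 0) : IsAlmostConst p := by
  rintro q q' ⟨a, b, c⟩ ⟨a', b', c'⟩ hq hq'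
  have hreach := hconn a a' (margX1_ne_zero hnn hq) (margX1_ne_zero hnn hq')
  have hcompat : IsCompatible p q (.inl a') :=
    .of_reachable hnn (leftUnique_margQX1 hnn h1) (leftUnique_margQX2 hnn h2) hreach
      (margQX1_ne_zero hnn hq)
  exact leftUnique_margQX1 hnn h1 hcompat (margQX1_ne_zero hnn hq')

theorem IsAlmostConst.miQY_eq_zero (hQ : IsAlmostConst p) (hsum : ∑ s, p s = 1) :
    miQY p = 0 := by
  refine sum_eq_zero fun q _ ↦ sum_eq_zero fun y _ ↦ ?_
  by_cases hq : ∀ s, p (q, s) = 0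
  · simp only [margQY, hq, sum_const_zero, zero_mul]
  obtain ⟨s, hs⟩ := not_forall.1 hq
  have hother (q') (hne : q' ≠ q) (t) : p (q', t) = 0 := by
    by_contra ht
    exact hne (hQ ht hs)
  have hmargQ : margQ p q = 1 := by
    rw [← hsum, Fintype.sum_prod_type, Fintype.sum_eq_single q fun q' hne ↦
      sum_eq_zero fun t _ ↦ hother q' hne t]
    simp only [margQ, Fintype.sum_prod_type]
  have hmargY : margY p y = margQY p q y :=
    Fintype.sum_eq_single q fun q' hne ↦ sum_eq_zero fun a _ ↦ sum_eq_zero fun b _ ↦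
      hother q' hne (a, b, y)
  rw [hmargQ, one_mul, hmargY]
  rcases eq_or_ne (margQY p q y) 0 with h0 | h0
  · rw [h0, zero_mul]
  · rw [div_self h0, logb_one, mul_zero]

end CommonInformation

theorem stmt_12_general {Q A B C : Type*} [Fintype Q] [Fintype A] [Fintype B] [Fintype C]
    (p : Q × A × B × C → ℝ) (hnn : ∀ s, 0 ≤ p s) (hsum : ∑ s, p s = 1)
    (hconn : ∀ a a', margX1 p a ≠ 0 → margX1 p a' ≠ 0 →
      (supportGraph p).Reachable (.inl a) (.inl a'))
    (h1 : condEntQX1 p = 0) (h2 : condEntQX2 p = 0) : miQY p = 0 :=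
  (isAlmostConst_of_condEnt_eq_zero hnn hconn h1 h2).miQY_eq_zero hsum

section ImperfectRdn

/-- The joint distribution of `(X₁, X₂, Y)` in the ImperfectRdn example. -/
noncomputable def imperfectRdn (x₁ x₂ y : Fin 2) : ℝ :=
  if x₁ = 0 ∧ x₂ = 0 ∧ y = 0 then 0.499
  else if x₁ = 0 ∧ x₂ = 1 ∧ y = 0 then 0.001
  else if x₁ = 1 ∧ x₂ = 1 ∧ y = 1 then 0.5
  else 0

variable {Q : Type*} [Fintype Q] {p : Q × Fin 2 × Fin 2 × Fin 2 → ℝ}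

theorem sum_eq_one_of_imperfectRdn
    (hmarg : ∀ x₁ x₂ y, ∑ q, p (q, x₁, x₂, y) = imperfectRdn x₁ x₂ y) : ∑ s, p s = 1 := by
  rw [Fintype.sum_prod_type_right]
  simp only [Fintype.sum_prod_type, hmarg, Fin.sum_univ_two]
  norm_num [imperfectRdn]

theorem imperfectRdn_self_one_self_ne_zero (x : Fin 2) : imperfectRdn x 1 x ≠ 0 := by
  fin_cases x <;> norm_num [imperfectRdn]

theorem supportGraph_reachable_of_imperfectRdn
    (hmarg : ∀ x₁ x₂ y, ∑ q, p (q, x₁, x₂, y) = imperfectRdn x₁ x₂ y) (x x' : Fin 2) :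
    (supportGraph p).Reachable (.inl x) (.inl x') := by
  have hadj (x : Fin 2) : (supportGraph p).Adj (.inl x) (.inr 1) := by
    obtain ⟨q, -, hq⟩ := exists_ne_zero_of_sum_ne_zero
      ((hmarg x 1 x).trans_ne (imperfectRdn_self_one_self_ne_zero x))
    exact supportGraph_adj_inl_inr hq
  exact (hadj x).reachable.trans (hadj x').symm.reachable

end ImperfectRdn

theorem stmt_12 {Q : Type*} [Fintype Q]
    (p : Q × Fin 2 × Fin 2 × Fin 2 → ℝ)
    (hnn : ∀ a, 0 ≤ p a)
    (hmarg : ∀ x₁ x₂ y : Fin 2,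
      (∑ q, p (q, x₁, x₂, y)) =
        if x₁ = 0 ∧ x₂ = 0 ∧ y = 0 then (0.499 : ℝ)
        else if x₁ = 0 ∧ x₂ = 1 ∧ y = 0 then (0.001 : ℝ)
        else if x₁ = 1 ∧ x₂ = 1 ∧ y = 1 then (0.5 : ℝ)
        else 0)
    (h1 : condEntQX1 p = 0)
    (h2 : condEntQX2 p = 0) :
    miQY p = 0 :=
  stmt_12_general p hnn (sum_eq_one_of_imperfectRdn hmarg)
    (fun x x' _ _ ↦ supportGraph_reachable_of_imperfectRdn hmarg x x') h1 h2
end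

section
/- Consider the RdnXor example: (X₁, X₂, Y) take values in (Fin 2 × Fin 2)³, where the joint distribution assigns probability 1/8 to each triple of the form ((r, a), (r, b), (r, a XOR b)) for r, a, b ∈ Fin 2, and 0 elsewhere. Then: (a) the random variable Q given by the first component of X₁ satisfies H(Q|X₁) = 0, H(Q|X₂) = 0, and I(Q:Y) = 1; and (b) for any random variable Q' on a finite type jointly distributed with (X₁, X₂, Y) consistently with this distribution, if H(Q'|X₁) = 0 and H(Q'|X₂) = 0, then I(Q':Y) ≤ 1. (Hence I_∧(X₁, X₂ : Y) = 1 bit for RdnXor.) -/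
open Real Finset

/-- The RdnXor distribution of `(X₁, X₂, Y)`: probability `1/8` on each triple
`((r,a),(r,b),(r, a XOR b))` with `r, a, b ∈ Fin 2` (XOR is addition in `Fin 2`). -/
noncomputable def rdnXor : (Fin 2 × Fin 2) × (Fin 2 × Fin 2) × (Fin 2 × Fin 2) → ℝ :=
  fun a =>
    if a.2.1.1 = a.1.1 ∧ a.2.2.1 = a.1.1 ∧ a.2.2.2 = a.1.2 + a.2.1.2 then (1 : ℝ) / 8 else 0

/-- The joint pmf of `(Q, X₁, X₂, Y)` where `Q` is the first component of `X₁`. -/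
noncomputable def rdnXorQ :
    Fin 2 × (Fin 2 × Fin 2) × (Fin 2 × Fin 2) × (Fin 2 × Fin 2) → ℝ :=
  fun a => if a.1 = a.2.1.1 then rdnXor a.2 else 0

/- The events `X₁ = (r, a)` and `X₂ = (r, b)` are compatible for all bits `a`, `b`, so a variable
determined by each of `X₁` and `X₂` takes a single value on each of the two slices `r = 0`, `r = 1`,
that is, it is `Q = φ(r)` for some `φ`. Each value taken by such a `Q` has probability at least
`1/2`, so `P(q, y) / (P(q) P(y)) ≤ 1 / P(q) ≤ 2` and `I(Q:Y) ≤ log₂ 2`. When `φ` is injective the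
density is exactly `2` on the support, as `Y` determines `Q`, and the bound is attained. -/

section FiniteDistributions

theorem mul_logb_div_eq_zero_iff {b m M : ℝ} (hb : 1 < b) (hm : 0 ≤ m) (hmM : m ≤ M) :
    m * logb b (m / M) = 0 ↔ m = 0 ∨ m = M := by
  rcases hm.eq_or_lt with rfl | hm
  · simp
  have hM : 0 < M := hm.trans_le hmM
  rw [mul_eq_zero, or_congr_right]
  refine ⟨fun hlog => ?_, fun h => by simp [h, hM.ne']⟩
  by_contra hne
  have hlt : m / M < 1 := (div_lt_one hM).2 (lt_of_le_of_ne hmM hne)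
  exact (logb_neg hb (div_pos hm hM) hlt).ne hlog

variable {Q A B C : Type*} {p : Q × A × B × C → ℝ}

theorem margQX1_ne_zero_iff [Fintype B] [Fintype C] (hp : ∀ ω, 0 ≤ p ω) (q : Q) (a : A) :
    margQX1 p q a ≠ 0 ↔ ∃ b c, p (q, a, b, c) ≠ 0 := by
  rw [margQX1, ne_eq, sum_eq_zero_iff_of_nonneg fun b _ => sum_nonneg fun _ _ => hp _]
  simp only [mem_univ, forall_const, sum_eq_zero_iff_of_nonneg fun _ _ => hp _, not_forall, ne_eq]

theorem sum_margQY_right [Fintype A] [Fintype B] [Fintype C] (q : Q) :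
    ∑ c, margQY p q c = margQ p q := by
  simp only [margQY, margQ]
  rw [sum_comm]
  exact sum_congr rfl fun a _ => sum_comm

variable [Fintype Q]

theorem eq_zero_or_eq_sum_iff {f : Q → ℝ} (hf : ∀ q, 0 ≤ f q) :
    (∀ q, f q = 0 ∨ f q = ∑ q', f q') ↔ ∀ q q', f q ≠ 0 → f q' ≠ 0 → q = q' := by
  classical
  refine ⟨fun h q q' hq hq' => ?_, fun h q => or_iff_not_imp_left.2 fun hq => ?_⟩
  · by_contra hne
    have hpair : f q + f q' ≤ ∑ i, f i := by
      rw [← sum_pair hne]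
      exact sum_le_univ_sum_of_nonneg hf
    have hpos : 0 < f q' := (hf q').lt_of_ne' hq'
    linarith [(h q).resolve_left hq]
  · refine (Fintype.sum_eq_single q fun q' hne => ?_).symm
    by_contra hq'
    exact hne (h q' q hq' hq)

theorem condEntropy_eq_zero_iff [Fintype A] {b : ℝ} (hb : 1 < b) {f : Q → A → ℝ}
    (hf : ∀ q a, 0 ≤ f q a) :
    -∑ q, ∑ a, f q a * logb b (f q a / ∑ q', f q' a) = 0 ↔
      ∀ a q q', f q a ≠ 0 → f q' a ≠ 0 → q = q' := by
  have hle (q : Q) (a : A) : f q a ≤ ∑ q', f q' a :=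
    single_le_sum (f := fun q' => f q' a) (fun q' _ => hf q' a) (mem_univ q)
  have hterm (q : Q) (a : A) : f q a * logb b (f q a / ∑ q', f q' a) ≤ 0 :=
    mul_nonpos_of_nonneg_of_nonpos (hf q a) <|
      logb_nonpos hb (div_nonneg (hf q a) ((hf q a).trans (hle q a)))
        (div_le_one_of_le₀ (hle q a) ((hf q a).trans (hle q a)))
  calc -∑ q, ∑ a, f q a * logb b (f q a / ∑ q', f q' a) = 0
      ↔ ∀ q a, f q a * logb b (f q a / ∑ q', f q' a) = 0 := by
        rw [neg_eq_zero, sum_eq_zero_iff_of_nonpos fun q _ => sum_nonpos fun a _ => hterm q a]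
        simp only [mem_univ, forall_const, sum_eq_zero_iff_of_nonpos fun a _ => hterm _ a]
    _ ↔ ∀ a q, f q a = 0 ∨ f q a = ∑ q', f q' a := by
        rw [forall_comm]
        simp only [mul_logb_div_eq_zero_iff hb (hf _ _) (hle _ _)]
    _ ↔ ∀ a q q', f q a ≠ 0 → f q' a ≠ 0 → q = q' :=
        forall_congr' fun a => eq_zero_or_eq_sum_iff fun q => hf q a

theorem eq_ite_sum_of_support_subset_graph [DecidableEq Q] {p : Q × A → ℝ} {f : A → Q}
    (h : ∀ q a, p (q, a) ≠ 0 → q = f a) (q : Q) (a : A) :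
    p (q, a) = if q = f a then ∑ q', p (q', a) else 0 := by
  split_ifs with hq
  · refine (Fintype.sum_eq_single (f := fun q' => p (q', a)) q fun q' hne => ?_).symm
    by_contra hq'
    exact hne ((h q' a hq').trans hq.symm)
  · by_contra hne
    exact hq (h q a hne)

variable [Fintype A] [Fintype B] [Fintype C]

theorem condEntQX1_eq_zero_iff (hp : ∀ ω, 0 ≤ p ω) :
    condEntQX1 p = 0 ↔ ∀ ω ω', p ω ≠ 0 → p ω' ≠ 0 → ω.2.1 = ω'.2.1 → ω.1 = ω'.1 := by
  refine (condEntropy_eq_zero_iff one_lt_two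
    fun q a => sum_nonneg fun b _ => sum_nonneg fun c _ => hp (q, a, b, c)).trans ?_
  constructor
  · rintro h ⟨q, a, b, c⟩ ⟨q', _, b', c'⟩ hω hω' rfl
    exact h a q q' ((margQX1_ne_zero_iff hp q a).2 ⟨b, c, hω⟩)
      ((margQX1_ne_zero_iff hp q' a).2 ⟨b', c', hω'⟩)
  · intro h a q q' hq hq'
    obtain ⟨b, c, hω⟩ := (margQX1_ne_zero_iff hp q a).1 hq
    obtain ⟨b', c', hω'⟩ := (margQX1_ne_zero_iff hp q' a).1 hq'
    exact h (q, a, b, c) (q', a, b', c') hω hω' rfl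

theorem condEntQX2_eq_zero_iff (hp : ∀ ω, 0 ≤ p ω) :
    condEntQX2 p = 0 ↔ ∀ ω ω', p ω ≠ 0 → p ω' ≠ 0 → ω.2.2.1 = ω'.2.2.1 → ω.1 = ω'.1 := by
  let swap : Q × B × A × C → Q × A × B × C := fun ω => (ω.1, ω.2.2.1, ω.2.1, ω.2.2.2)
  refine (condEntQX1_eq_zero_iff (p := p ∘ swap) fun ω => hp (swap ω)).trans ?_
  exact ⟨fun h ω ω' => h (ω.1, ω.2.2.1, ω.2.1, ω.2.2.2) (ω'.1, ω'.2.2.1, ω'.2.1, ω'.2.2.2),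
    fun h ω ω' => h (swap ω) (swap ω')⟩

theorem sum_margQY : ∑ q, ∑ c, margQY p q c = ∑ ω, p ω := by
  simp only [sum_margQY_right, margQ, Fintype.sum_prod_type]

theorem miQY_le_logb (hp : ∀ ω, 0 ≤ p ω) (hp₁ : ∑ ω, p ω = 1) {K : ℝ} (hK : 0 < K)
    (h : ∀ q c, margQY p q c ≤ K * (margQ p q * margY p c)) : miQY p ≤ logb 2 K := by
  have hnonneg (q : Q) (c : C) : 0 ≤ margQY p q c :=
    sum_nonneg fun a _ => sum_nonneg fun b _ => hp _
  have hterm (q : Q) (c : C) :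
      margQY p q c * logb 2 (margQY p q c / (margQ p q * margY p c)) ≤
        margQY p q c * logb 2 K := by
    rcases (hnonneg q c).eq_or_lt with h0 | hpos
    · simp [← h0]
    · have hprod : 0 < margQ p q * margY p c := pos_of_mul_pos_right (hpos.trans_le (h q c)) hK.le
      gcongr
      · exact one_lt_two
      · exact (div_le_iff₀ hprod).2 (h q c)
  calc miQY p ≤ ∑ q, ∑ c, margQY p q c * logb 2 K :=
        sum_le_sum fun q _ => sum_le_sum fun c _ => hterm q c
    _ = logb 2 K := by simp only [← sum_mul, sum_margQY, hp₁, one_mul]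

theorem miQY_eq_logb (hp₁ : ∑ ω, p ω = 1) {K : ℝ}
    (h : ∀ q c, margQY p q c ≠ 0 → margQY p q c = K * (margQ p q * margY p c)) :
    miQY p = logb 2 K := by
  have hterm (q : Q) (c : C) :
      margQY p q c * logb 2 (margQY p q c / (margQ p q * margY p c)) =
        margQY p q c * logb 2 K := by
    by_cases h0 : margQY p q c = 0
    · simp [h0]
    · have hprod : margQ p q * margY p c ≠ 0 := right_ne_zero_of_mul (h q c h0 ▸ h0)
      rw [(div_eq_iff hprod).2 (h q c h0)]
  simp only [miQY, hterm, ← sum_mul, sum_margQY, hp₁, one_mul]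

end FiniteDistributions

section RdnXor

theorem rdnXor_nonneg (w : (Fin 2 × Fin 2) × (Fin 2 × Fin 2) × (Fin 2 × Fin 2)) :
    0 ≤ rdnXor w := by
  unfold rdnXor
  positivity

theorem rdnXor_ne_zero_iff {x₁ x₂ y : Fin 2 × Fin 2} :
    rdnXor (x₁, x₂, y) ≠ 0 ↔ x₂.1 = x₁.1 ∧ y.1 = x₁.1 ∧ y.2 = x₁.2 + x₂.2 := by
  simp [rdnXor]

theorem sum_rdnXor_eq_one_div_four (y : Fin 2 × Fin 2) :
    ∑ x₁, ∑ x₂, rdnXor (x₁, x₂, y) = 1 / 4 := by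
  obtain ⟨r, c⟩ := y
  have htwo : (1 + 1 : Fin 2) = 0 := rfl
  fin_cases r <;> fin_cases c <;>
    norm_num [rdnXor, Fintype.sum_prod_type, Fin.sum_univ_two, htwo]

variable {Q : Type*} [DecidableEq Q]

/-- The joint pmf of `(φ(r), X₁, X₂, Y)`, where `r` is the bit shared by the three RdnXor
variables, read off as the first component of `X₁`. -/
noncomputable def rdnXorOf (φ : Fin 2 → Q) :
    Q × (Fin 2 × Fin 2) × (Fin 2 × Fin 2) × (Fin 2 × Fin 2) → ℝ :=
  fun ω => if ω.1 = φ ω.2.1.1 then rdnXor ω.2 else 0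

theorem rdnXorQ_eq_rdnXorOf_id : rdnXorQ = rdnXorOf id := rfl

theorem rdnXorOf_nonneg (φ : Fin 2 → Q)
    (ω : Q × (Fin 2 × Fin 2) × (Fin 2 × Fin 2) × (Fin 2 × Fin 2)) : 0 ≤ rdnXorOf φ ω :=
  ite_nonneg (rdnXor_nonneg _) le_rfl

theorem rdnXorOf_ne_zero {φ : Fin 2 → Q}
    {ω : Q × (Fin 2 × Fin 2) × (Fin 2 × Fin 2) × (Fin 2 × Fin 2)} (h : rdnXorOf φ ω ≠ 0) :
    ω.1 = φ ω.2.1.1 ∧ ω.1 = φ ω.2.2.1.1 := by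
  obtain ⟨hq, hw⟩ := ite_ne_right_iff.1 h
  exact ⟨hq, (rdnXor_ne_zero_iff.1 hw).1 ▸ hq⟩

theorem margQY_rdnXorOf (φ : Fin 2 → Q) (q : Q) (y : Fin 2 × Fin 2) :
    margQY (rdnXorOf φ) q y = if q = φ y.1 then 1 / 4 else 0 := by
  have hy (x₁ x₂ : Fin 2 × Fin 2) :
      rdnXorOf φ (q, x₁, x₂, y) = if q = φ y.1 then rdnXor (x₁, x₂, y) else 0 := by
    by_cases hw : rdnXor (x₁, x₂, y) = 0
    · simp [rdnXorOf, hw]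
    · simp only [rdnXorOf, (rdnXor_ne_zero_iff.1 hw).2.1]
  simp only [margQY, hy]
  split_ifs
  · exact sum_rdnXor_eq_one_div_four y
  · simp

theorem margQ_rdnXorOf (φ : Fin 2 → Q) (q : Q) :
    margQ (rdnXorOf φ) q = ∑ r, if q = φ r then 1 / 2 else 0 := by
  rw [← sum_margQY_right, Fintype.sum_prod_type]
  refine sum_congr rfl fun r _ => ?_
  simp only [margQY_rdnXorOf, Fin.sum_univ_two]
  split_ifs <;> norm_num

variable [Fintype Q] (φ : Fin 2 → Q)

theorem condEntQX1_rdnXorOf : condEntQX1 (rdnXorOf φ) = 0 :=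
  (condEntQX1_eq_zero_iff (rdnXorOf_nonneg φ)).2 fun ω ω' hω hω' hx => by
    rw [(rdnXorOf_ne_zero hω).1, (rdnXorOf_ne_zero hω').1, hx]

theorem condEntQX2_rdnXorOf : condEntQX2 (rdnXorOf φ) = 0 :=
  (condEntQX2_eq_zero_iff (rdnXorOf_nonneg φ)).2 fun ω ω' hω hω' hx => by
    rw [(rdnXorOf_ne_zero hω).2, (rdnXorOf_ne_zero hω').2, hx]

theorem margY_rdnXorOf (y : Fin 2 × Fin 2) : margY (rdnXorOf φ) y = 1 / 4 :=
  calc margY (rdnXorOf φ) y = ∑ q, margQY (rdnXorOf φ) q y := rfl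
    _ = 1 / 4 := by simp [margQY_rdnXorOf]

theorem sum_rdnXorOf : ∑ ω, rdnXorOf φ ω = 1 := by
  rw [← sum_margQY, sum_comm]
  simp [margQY_rdnXorOf]

theorem miQY_rdnXorOf_le_one : miQY (rdnXorOf φ) ≤ 1 := by
  rw [← logb_self_eq_one one_lt_two]
  refine miQY_le_logb (rdnXorOf_nonneg φ) (sum_rdnXorOf φ) two_pos fun q y => ?_
  have hhalf : (if q = φ y.1 then 1 / 2 else 0) ≤ margQ (rdnXorOf φ) q := by
    rw [margQ_rdnXorOf]
    exact single_le_sum (f := fun r => if q = φ r then (1 / 2 : ℝ) else 0)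
      (fun r _ => by positivity) (mem_univ y.1)
  rw [margQY_rdnXorOf, margY_rdnXorOf]
  split_ifs at hhalf ⊢ <;> linarith

variable {φ} in
theorem miQY_rdnXorOf_eq_one (hφ : Function.Injective φ) : miQY (rdnXorOf φ) = 1 := by
  rw [← logb_self_eq_one one_lt_two]
  refine miQY_eq_logb (sum_rdnXorOf φ) fun q y hqy => ?_
  rw [margQY_rdnXorOf] at hqy
  obtain rfl : q = φ y.1 := (ite_ne_right_iff.1 hqy).1
  simp only [margQY_rdnXorOf, margQ_rdnXorOf, margY_rdnXorOf, hφ.eq_iff, if_true, sum_ite_eq,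
    mem_univ]
  norm_num

theorem exists_eq_rdnXorOf {p : Q × (Fin 2 × Fin 2) × (Fin 2 × Fin 2) × (Fin 2 × Fin 2) → ℝ}
    (hp : ∀ ω, 0 ≤ p ω) (hmarg : ∀ x₁ x₂ y, ∑ q, p (q, x₁, x₂, y) = rdnXor (x₁, x₂, y))
    (hX₁ : condEntQX1 p = 0) (hX₂ : condEntQX2 p = 0) : ∃ φ, p = rdnXorOf φ := by
  rw [condEntQX1_eq_zero_iff hp] at hX₁
  rw [condEntQX2_eq_zero_iff hp] at hX₂
  have hex (r a b : Fin 2) : ∃ q, p (q, (r, a), (r, b), (r, a + b)) ≠ 0 := by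
    have hsum : ∑ q, p (q, (r, a), (r, b), (r, a + b)) ≠ 0 := by
      rw [hmarg, rdnXor_ne_zero_iff]
      exact ⟨rfl, rfl, rfl⟩
    obtain ⟨q, -, hq⟩ := exists_ne_zero_of_sum_ne_zero hsum
    exact ⟨q, hq⟩
  choose φ hφ using fun r => hex r 0 0
  have hsupp (q : Q) (w : (Fin 2 × Fin 2) × (Fin 2 × Fin 2) × (Fin 2 × Fin 2))
      (hqw : p (q, w) ≠ 0) : q = φ w.1.1 := by
    obtain ⟨⟨r, a⟩, ⟨s, b⟩, y⟩ := w
    have hw : rdnXor ((r, a), (s, b), y) ≠ 0 := fun h0 => by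
      rw [← hmarg, sum_eq_zero_iff_of_nonneg fun q _ => hp _] at h0
      exact hqw (h0 q (mem_univ q))
    obtain rfl : s = r := (rdnXor_ne_zero_iff.1 hw).1
    -- Pass from `(a, b)` to `(0, 0)` through `(0, b)`, fixing first `X₂` and then `X₁`.
    obtain ⟨q', hq'⟩ := hex s 0 b
    exact (hX₂ _ _ hqw hq' rfl).trans (hX₁ _ _ hq' (hφ s) rfl)
  refine ⟨φ, funext fun ⟨q, w⟩ => ?_⟩
  rw [eq_ite_sum_of_support_subset_graph (p := p) (f := fun w => φ w.1.1) hsupp, hmarg]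
  rfl

end RdnXor

theorem stmt_13 :
    (condEntQX1 rdnXorQ = 0 ∧ condEntQX2 rdnXorQ = 0 ∧ miQY rdnXorQ = 1) ∧
    (∀ (Q' : Type) (_ : Fintype Q')
        (p : Q' × (Fin 2 × Fin 2) × (Fin 2 × Fin 2) × (Fin 2 × Fin 2) → ℝ),
      (∀ a, 0 ≤ p a) →
      (∀ x₁ x₂ y, (∑ q, p (q, x₁, x₂, y)) = rdnXor (x₁, x₂, y)) →
      condEntQX1 p = 0 → condEntQX2 p = 0 → miQY p ≤ 1) := by
  refine ⟨?_, fun Q' _ p hp hmarg hX₁ hX₂ => ?_⟩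
  · rw [rdnXorQ_eq_rdnXorOf_id]
    exact ⟨condEntQX1_rdnXorOf id, condEntQX2_rdnXorOf id,
      miQY_rdnXorOf_eq_one Function.injective_id⟩
  · classical
    obtain ⟨φ, rfl⟩ := exists_eq_rdnXorOf hp hmarg hX₁ hX₂
    exact miQY_rdnXorOf_le_one φ
end
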